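/- Let n ≥ 2, let x₁, …, xₙ be pairwise distinct variables, and let φₙ = {{¬xᵢ, x_{i+1}} : 1 ≤ i < n} ∪ {{¬xₙ, ¬x₁}}. Then φₙ ⊨ ¬x₁ (so x₁ is a backbone of φₙ), but for every integer k with 1 ≤ k < n, the variable x₁ is not an iterative k-backbone of φₙ. -/

import Mathlib

/-! Basic definitions: literals, clauses, CNF formulas, satisfaction,
entailment, reducts, (iterative) k-backbones, Horn clauses, hyperpaths,
implication-graph paths for Krom formulas. -/

section LB

variable {V : Type*}

/-- The complement of a literal (a literal is a variable together with a polarity). -/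
def LitCompl (l : V × Bool) : V × Bool := (l.1, !l.2)

/-- A clause is proper: it contains no complementary pair of literals. -/
def ClauseOk (c : Finset (V × Bool)) : Prop := ∀ x : V, ¬((x, true) ∈ c ∧ (x, false) ∈ c)

/-- An assignment satisfies a clause if it makes some literal of it true. -/
def SatClause (τ : V → Bool) (c : Finset (V × Bool)) : Prop := ∃ l ∈ c, τ l.1 = l.2

/-- An assignment satisfies a CNF formula if it satisfies all of its clauses. -/
def SatCNF (τ : V → Bool) (φ : Finset (Finset (V × Bool))) : Prop := ∀ c ∈ φ, SatClause τ c

/-- A CNF formula is satisfiable if some assignment satisfies it. -/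
def CNFSatisfiable (φ : Finset (Finset (V × Bool))) : Prop := ∃ τ, SatCNF τ φ

/-- `φ ⊨ l`: every assignment satisfying `φ` makes the literal `l` true. -/
def EntailsLit (φ : Finset (Finset (V × Bool))) (l : V × Bool) : Prop :=
  ∀ τ : V → Bool, SatCNF τ φ → τ l.1 = l.2

/-- `x` is a `k`-backbone of `φ`: some subset of at most `k` clauses entails `x` or `¬x`. -/
def KBackbone (φ : Finset (Finset (V × Bool))) (k : ℕ) (x : V) : Prop :=
  ∃ ψ ⊆ φ, ψ.card ≤ k ∧ (EntailsLit ψ (x, true) ∨ EntailsLit ψ (x, false))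

/-- A Horn clause: at most one positive literal. -/
def IsHornClause (c : Finset (V × Bool)) : Prop := (c.filter (fun l => l.2 = true)).card ≤ 1

/-- A definite Horn clause: exactly one positive literal. -/
def IsDefHornClause (c : Finset (V × Bool)) : Prop := (c.filter (fun l => l.2 = true)).card = 1

variable [DecidableEq V]

/-- The set of variables occurring in a CNF formula. -/
def cnfVars (φ : Finset (Finset (V × Bool))) : Finset V := φ.sup (fun c => c.image Prod.fst)

/-- The reduct `φ|_l`: delete clauses containing `l`, remove occurrences of the
complement of `l` from the remaining clauses. -/
def Reduct (φ : Finset (Finset (V × Bool))) (l : V × Bool) : Finset (Finset (V × Bool)) :=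
  (φ.filter (fun c => l ∉ c)).image (fun c => c.erase (LitCompl l))

/-- The reduct `φ|_L` with respect to a set `L` of literals. -/
def ReductSet (φ : Finset (Finset (V × Bool))) (L : Finset (V × Bool)) :
    Finset (Finset (V × Bool)) :=
  (φ.filter (fun c => ∀ l ∈ L, l ∉ c)).image (fun c => c.filter (fun m => LitCompl m ∉ L))

/-- `x` is an iterative `k`-backbone of `φ`: either it is a `k`-backbone, or some
`k`-backbone `y` with `φ ⊨ l`, `l ∈ {y, ¬y}`, makes `x` an iterative `k`-backbone
of `φ|_l`. -/
inductive IterKBackbone (k : ℕ) : Finset (Finset (V × Bool)) → V → Prop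
  | base {φ : Finset (Finset (V × Bool))} {x : V} :
      KBackbone φ k x → IterKBackbone k φ x
  | step {φ : Finset (Finset (V × Bool))} {x y : V} (b : Bool) :
      KBackbone φ k y → EntailsLit φ (y, b) →
      IterKBackbone k (Reduct φ (y, b)) x → IterKBackbone k φ x

/-- `IsHyperpath φ' s t`: the (Horn) formula `φ'` is a hyperpath from `s` to `t`:
either `t = s`, or there is a clause `c = {¬x₁, …, ¬xₙ, t} ∈ φ'` such that
`φ' \ {c}` is a hyperpath from `s` to each `xᵢ`. -/
inductive IsHyperpath : Finset (Finset (V × Bool)) → V → V → Prop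
  | refl (φ' : Finset (Finset (V × Bool))) (s : V) : IsHyperpath φ' s s
  | step {φ' : Finset (Finset (V × Bool))} {s t : V} (c : Finset (V × Bool)) :
      c ∈ φ' → (t, true) ∈ c → (∀ l ∈ c, l.2 = true → l = (t, true)) →
      (∀ l ∈ c, l.2 = false → IsHyperpath (φ'.erase c) s l.1) →
      IsHyperpath φ' s t

/-- A directed path in the implication graph of a Krom formula `φ`, recorded as a
list of steps `(p, c, q)`: the edge from literal `p` to literal `q` arising from the
clause `c = {p̄, q} ∈ φ`. -/
inductive ImplPath (φ : Finset (Finset (V × Bool))) :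
    (V × Bool) → List ((V × Bool) × Finset (V × Bool) × (V × Bool)) → (V × Bool) → Prop
  | nil (p : V × Bool) : ImplPath φ p [] p
  | cons {p q r : V × Bool} {c : Finset (V × Bool)}
      {steps : List ((V × Bool) × Finset (V × Bool) × (V × Bool))} :
      c ∈ φ → c = {LitCompl p, q} → ImplPath φ q steps r →
      ImplPath φ p ((p, c, q) :: steps) r

/-- The set of clauses used by a path in the implication graph. -/
def usedClauses (steps : List ((V × Bool) × Finset (V × Bool) × (V × Bool))) :
    Finset (Finset (V × Bool)) :=
  (steps.map (fun st => st.2.1)).toFinset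

/-- A path doubly uses a clause if it traverses both of its (distinct) edges. -/
def DoublyUses (steps : List ((V × Bool) × Finset (V × Bool) × (V × Bool)))
    (c : Finset (V × Bool)) : Prop :=
  ∃ p q : V × Bool, (p, c, q) ∈ steps ∧ (LitCompl q, c, LitCompl p) ∈ steps ∧ p ≠ LitCompl q

end LB

/-!
The clauses of `φₙ` are the implications `x₁ → x₂ → ⋯ → xₙ → ¬x₁`, which together refute `x₁`.
Once a single one of them is dropped, say the `i`-th, every variable can take both values: all
variables may be false, the variables `x₁, …, xᵢ` may be exactly the true ones, and they may be
exactly the false ones. Fewer than `n` clauses therefore entail no literal at all, so that the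
iteration cannot even perform its first step.
-/

section Backbone

open Finset

variable {V : Type*} {φ : Finset (Finset (V × Bool))} {k : ℕ} {y : V}

theorem EntailsLit.kBackbone_card {b : Bool} (h : EntailsLit φ (y, b)) :
    KBackbone φ φ.card y :=
  ⟨φ, Subset.rfl, le_rfl, by cases b <;> simp [h]⟩

variable [DecidableEq V]

theorem IterKBackbone.exists_kBackbone (h : IterKBackbone k φ y) : ∃ z, KBackbone φ k z := by
  cases h with
  | base hy => exact ⟨_, hy⟩
  | step _ hz _ _ => exact ⟨_, hz⟩

theorem satCNF_image {ι : Type*} {s : Finset ι} {C : ι → Finset (V × Bool)} {τ : V → Bool} :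
    SatCNF τ (s.image C) ↔ ∀ i ∈ s, SatClause τ (C i) :=
  forall_mem_image

theorem not_kBackbone_image {ι : Type*} {s : Finset ι} {C : ι → Finset (V × Bool)}
    (hk : k < s.card)
    (hfree : ∀ i ∈ s, ∀ b, ∃ τ : V → Bool, (∀ j ∈ s, j ≠ i → SatClause τ (C j)) ∧ τ y = b) :
    ¬ KBackbone (s.image C) k y := by
  rintro ⟨ψ, hψ, hcard, hy⟩
  obtain ⟨t, hts, hinj, rfl⟩ := exists_subset_injOn_image_eq_of_surjOn (f := C) s ψ
    fun c hc ↦ by simpa using hψ hc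
  rw [card_image_of_injOn hinj] at hcard
  obtain ⟨i, his, hit⟩ := exists_mem_notMem_of_card_lt_card (hcard.trans_lt hk)
  have hnot (b : Bool) : ¬ EntailsLit (t.image C) (y, b) := by
    intro hent
    obtain ⟨τ, hτ, hτy⟩ := hfree i his !b
    have hsat : SatCNF τ (t.image C) :=
      satCNF_image.2 fun j hj ↦ hτ j (hts hj) (ne_of_mem_of_not_mem hj hit)
    exact Bool.not_ne_self b (hτy.symm.trans (hent τ hsat))
  exact hy.elim (hnot true) (hnot false)

end Backbone

section Chain

open Finset

variable {V : Type*} [DecidableEq V] {n i j : ℕ} {x : ℕ → V} {τ : V → Bool}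

/-- The `i`-th clause of `φₙ`: the implication `xᵢ → xᵢ₊₁`, or `xₙ → ¬x₁` when `i = n`. Indexing
the exceptional clause by `n` lets all clauses be treated as one family over `1, …, n`. -/
def chainClause (n : ℕ) (x : ℕ → V) (i : ℕ) : Finset (V × Bool) :=
  if i = n then {(x n, false), (x 1, false)} else {(x i, false), (x (i + 1), true)}

/-- The formula `φₙ`, the chain of implications `x₁ → x₂ → ⋯ → xₙ → ¬x₁`. -/
def chainCNF (n : ℕ) (x : ℕ → V) : Finset (Finset (V × Bool)) :=
  (Icc 1 n).image (chainClause n x)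

theorem chainCNF_eq_union (hn : 1 ≤ n) (x : ℕ → V) :
    chainCNF n x =
      (Ico 1 n).image (fun i ↦ ({(x i, false), (x (i + 1), true)} : Finset (V × Bool))) ∪
        {({(x n, false), (x 1, false)} : Finset (V × Bool))} := by
  have hIco : (Ico 1 n).image (chainClause n x) =
      (Ico 1 n).image fun i ↦ {(x i, false), (x (i + 1), true)} :=
    image_congr fun i hi ↦ if_neg (mem_Ico.1 hi).2.ne
  rw [chainCNF, ← Ico_insert_right hn, image_insert, hIco, insert_eq, union_comm, chainClause,
    if_pos rfl]

theorem satClause_chainClause_of_ne (hi : i ≠ n) :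
    SatClause τ (chainClause n x i) ↔ (τ (x i) = true → τ (x (i + 1)) = true) := by
  simp [SatClause, chainClause, hi, imp_iff_not_or]

theorem satClause_chainClause_self :
    SatClause τ (chainClause n x n) ↔ (τ (x n) = true → τ (x 1) = false) := by
  simp [SatClause, chainClause, imp_iff_not_or]

theorem entailsLit_chainCNF (hn : 1 ≤ n) (x : ℕ → V) : EntailsLit (chainCNF n x) (x 1, false) := by
  intro τ hτ
  rw [chainCNF, satCNF_image] at hτ
  by_contra hx₁
  replace hx₁ : τ (x 1) = true := Bool.eq_true_of_not_eq_false hx₁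
  have hchain : ∀ i, 1 ≤ i → i ≤ n → τ (x i) = true := by
    intro i hi
    induction i, hi using Nat.le_induction with
    | base => exact fun _ ↦ hx₁
    | succ i hi ih =>
      intro hin
      have hsat := hτ i (mem_Icc.2 ⟨hi, by omega⟩)
      exact (satClause_chainClause_of_ne (by omega)).1 hsat (ih (by omega))
  have hlast := satClause_chainClause_self.1 (hτ n (mem_Icc.2 ⟨hn, le_rfl⟩))
  simp [hlast (hchain n hn le_rfl)] at hx₁

/-- The set of variables `{x₁, …, xᵢ}`, cut off from the rest of the chain when the `i`-th clause
of `φₙ` is dropped; its indicator and the complement thereof serve as assignments. -/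
def chainPrefix (x : ℕ → V) (i : ℕ) : Finset V :=
  (Icc 1 i).image x

theorem mem_chainPrefix_iff_le (hinj : Set.InjOn x (Set.Icc 1 n)) (hi : i ≤ n) (hj : j ∈ Icc 1 n) :
    x j ∈ chainPrefix x i ↔ j ≤ i := by
  rw [← mem_coe, chainPrefix, coe_image, coe_Icc,
    hinj.mem_image_iff (Set.Icc_subset_Icc_right hi) (mem_Icc.1 hj)]
  exact and_iff_right (mem_Icc.1 hj).1

theorem satClause_chainClause_const_false (n : ℕ) (x : ℕ → V) (j : ℕ) :
    SatClause (fun _ ↦ false) (chainClause n x j) := by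
  obtain rfl | hjn := eq_or_ne j n
  · simp [satClause_chainClause_self]
  · simp [satClause_chainClause_of_ne hjn]

theorem satClause_chainClause_prefix (hinj : Set.InjOn x (Set.Icc 1 n)) (hi : i ≤ n)
    (hj : j ∈ Icc 1 n) (hji : j ≠ i) :
    SatClause (fun v ↦ decide (v ∈ chainPrefix x i)) (chainClause n x j) := by
  have hmem {m : ℕ} := mem_chainPrefix_iff_le (j := m) hinj hi
  rw [mem_Icc] at hj
  obtain rfl | hjn := eq_or_ne j n
  · have hlast : x j ∉ chainPrefix x i := by rw [hmem (mem_Icc.2 hj)]; omega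
    simp [satClause_chainClause_self, hlast]
  · rw [satClause_chainClause_of_ne hjn, decide_eq_true_iff, decide_eq_true_iff,
      hmem (mem_Icc.2 hj), hmem (mem_Icc.2 (by omega))]
    omega

theorem satClause_chainClause_compl_prefix (hinj : Set.InjOn x (Set.Icc 1 n)) (hi : i ∈ Icc 1 n)
    (hj : j ∈ Icc 1 n) :
    SatClause (fun v ↦ decide (v ∉ chainPrefix x i)) (chainClause n x j) := by
  rw [mem_Icc] at hi hj
  have hmem {m : ℕ} := mem_chainPrefix_iff_le (j := m) hinj hi.2
  obtain rfl | hjn := eq_or_ne j n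
  · have hfirst : x 1 ∈ chainPrefix x i := (hmem (mem_Icc.2 (by omega))).2 hi.1
    simp [satClause_chainClause_self, hfirst]
  · rw [satClause_chainClause_of_ne hjn, decide_eq_true_iff, decide_eq_true_iff,
      hmem (mem_Icc.2 hj), hmem (mem_Icc.2 (by omega))]
    omega

theorem exists_satClause_chainClause_of_ne (hinj : Set.InjOn x (Set.Icc 1 n)) (hi : i ∈ Icc 1 n)
    (y : V) (b : Bool) :
    ∃ τ : V → Bool, (∀ j ∈ Icc 1 n, j ≠ i → SatClause τ (chainClause n x j)) ∧ τ y = b := by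
  cases b with
  | false => exact ⟨fun _ ↦ false, fun j _ _ ↦ satClause_chainClause_const_false n x j, rfl⟩
  | true =>
    by_cases hy : y ∈ chainPrefix x i
    · exact ⟨fun v ↦ decide (v ∈ chainPrefix x i),
        fun j ↦ satClause_chainClause_prefix hinj (mem_Icc.1 hi).2, decide_eq_true hy⟩
    · exact ⟨fun v ↦ decide (v ∉ chainPrefix x i),
        fun j hj _ ↦ satClause_chainClause_compl_prefix hinj hi hj, decide_eq_true hy⟩

theorem not_kBackbone_chainCNF (hinj : Set.InjOn x (Set.Icc 1 n)) {k : ℕ} (hk : k < n) (y : V) :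
    ¬ KBackbone (chainCNF n x) k y :=
  not_kBackbone_image (by simpa using hk) fun _ hi ↦ exists_satClause_chainClause_of_ne hinj hi y

theorem not_iterKBackbone_chainCNF (hinj : Set.InjOn x (Set.Icc 1 n)) {k : ℕ} (hk : k < n)
    (y : V) : ¬ IterKBackbone k (chainCNF n x) y := fun h ↦
  let ⟨z, hz⟩ := h.exists_kBackbone
  not_kBackbone_chainCNF hinj hk z hz

end Chain

/-- For `n ≥ 2` and pairwise distinct variables `x₁, …, xₙ`, the formula
`φₙ = {{¬xᵢ, x_{i+1}} : 1 ≤ i < n} ∪ {{¬xₙ, ¬x₁}}` entails `¬x₁` (so `x₁` is a backbone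
of `φₙ`), but for every `1 ≤ k < n`, the variable `x₁` is not an iterative `k`-backbone
of `φₙ`. -/
theorem stmt12 {V : Type*} [DecidableEq V] (n : ℕ) (hn : 2 ≤ n) (x : ℕ → V)
    (hinj : Set.InjOn x (Set.Icc 1 n)) :
    EntailsLit
        ((Finset.Ico 1 n).image
            (fun i => ({(x i, false), (x (i + 1), true)} : Finset (V × Bool))) ∪
          {({(x n, false), (x 1, false)} : Finset (V × Bool))}) (x 1, false) ∧
      KBackbone
        ((Finset.Ico 1 n).image
            (fun i => ({(x i, false), (x (i + 1), true)} : Finset (V × Bool))) ∪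
          {({(x n, false), (x 1, false)} : Finset (V × Bool))})
        ((Finset.Ico 1 n).image
            (fun i => ({(x i, false), (x (i + 1), true)} : Finset (V × Bool))) ∪
          {({(x n, false), (x 1, false)} : Finset (V × Bool))}).card (x 1) ∧
      ∀ k : ℕ, 1 ≤ k → k < n →
        ¬ IterKBackbone k
            ((Finset.Ico 1 n).image
                (fun i => ({(x i, false), (x (i + 1), true)} : Finset (V × Bool))) ∪
              {({(x n, false), (x 1, false)} : Finset (V × Bool))}) (x 1) := by
  have hn₁ : 1 ≤ n := by omega
  rw [← chainCNF_eq_union hn₁ x]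
  have hent : EntailsLit (chainCNF n x) (x 1, false) := entailsLit_chainCNF hn₁ x
  exact ⟨hent, hent.kBackbone_card, fun k _ hk ↦ not_iterKBackbone_chainCNF hinj hk (x 1)⟩
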